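/- Let Λ ≥ 1 and let λ_1, …, λ_{2n} be positive reals with λ_{2k−1} λ_{2k} = 1 for k = 1, …, n and 1/√Λ ≤ λ_i ≤ √Λ for all i. Set c = 8/(√Λ + 1/√Λ)². Then Σ_{k odd} (λ_k − λ_{k'})²/(λ_k + λ_{k'})² ≥ c (ln ∏_{k odd} (λ_k + λ_{k'}) − n ln 2); equivalently, Σ_{k odd} (1 − λ_k²)²/(1 + λ_k²)² ≥ −c (ln(1/√(∏_i (1 + λ_i²))) − ln(1/2^n)). -/

import Mathlib

/-!
Put `s = λ_k + λ_{k'}` and `S = √Λ + 1/√Λ`. Since `λ_k λ_{k'} = 1`, the `k`-th summand is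
`1 - 4/s²`, and the pinching gives `s ≤ S`. From `ln x ≤ x - 1` at `x = s²/4`,
`(8/S²) ln (s/2) = (4/S²) ln (s²/4) ≤ (4/s²) (s²/4 - 1) = 1 - 4/s²`,
which is the claim for a single pair (`pair_bound`); summing over the `n` pairs gives the first
inequality. For the second, `(1 + λ_k²)(1 + λ_{k'}²) = s²`, so that `√(∏ (1 + λ_i²)) = ∏ s`, and
dividing numerator and denominator by `λ_k` identifies the two left-hand sides.
-/

open Finset

/-- The involution `i ↦ i'` on `Fin (2n)` (0-indexed: `i' = i+1` for even `i`,
`i' = i−1` for odd `i`). -/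
def pr (n : ℕ) (i : Fin (2 * n)) : Fin (2 * n) :=
  if _h : (i : ℕ) % 2 = 0 then ⟨(i : ℕ) + 1, by have := i.isLt; omega⟩
  else ⟨(i : ℕ) - 1, by have := i.isLt; omega⟩

lemma pr_val_even {n : ℕ} {i : Fin (2 * n)} (h : (i : ℕ) % 2 = 0) :
    (pr n i : ℕ) = i + 1 := by
  simp [pr, h]

lemma pr_val_odd {n : ℕ} {i : Fin (2 * n)} (h : ¬ (i : ℕ) % 2 = 0) :
    (pr n i : ℕ) = i - 1 := by
  simp [pr, h]

lemma prod_univ_eq_prod_pairs (n : ℕ) (f : Fin (2 * n) → ℝ) :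
    ∏ i, f i = ∏ k ∈ univ.filter (fun k : Fin (2 * n) => (k : ℕ) % 2 = 0),
      (f k * f (pr n k)) := by
  rw [← Finset.prod_filter_mul_prod_filter_not univ (fun k : Fin (2 * n) => (k : ℕ) % 2 = 0),
    Finset.prod_mul_distrib]
  congr 1
  symm
  refine Finset.prod_nbij' (pr n) (pr n) ?_ ?_ ?_ ?_ (fun _ _ => rfl)
  · intro a ha
    simp only [mem_filter, mem_univ, true_and] at ha ⊢
    have := pr_val_even ha
    omega
  · intro a ha
    simp only [mem_filter, mem_univ, true_and] at ha ⊢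
    have := pr_val_odd ha
    omega
  · intro a ha
    simp only [mem_filter, mem_univ, true_and] at ha
    have h1 := pr_val_even ha
    have h2 := pr_val_odd (i := pr n a) (by omega)
    exact Fin.ext (by omega)
  · intro a ha
    simp only [mem_filter, mem_univ, true_and] at ha
    have h1 := pr_val_odd ha
    have h2 := pr_val_even (i := pr n a) (by omega)
    exact Fin.ext (by omega)

lemma card_pairs (n : ℕ) :
    (univ.filter (fun k : Fin (2 * n) => (k : ℕ) % 2 = 0)).card = n := by
  -- Compare exponents in the pairing formula for the constant function `2`.
  have h := prod_univ_eq_prod_pairs n (fun _ => 2)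
  simp only [Finset.prod_const, Finset.card_univ, Fintype.card_fin, ← pow_two, ← pow_mul] at h
  have := pow_right_injective₀ (by norm_num : (0 : ℝ) < 2) (by norm_num) h
  omega

/-- The inequality for a single pair `a, b` with `a b = 1`; here `r` stands for `√Λ`. -/
lemma pair_bound {a b r : ℝ} (ha : 0 < a) (hb : 0 < b) (hab : a * b = 1) (hr : 0 < r)
    (har : a ≤ r) (hbr : b ≤ r) :
    8 / (r + 1 / r) ^ 2 * (Real.log (a + b) - Real.log 2) ≤ (a - b) ^ 2 / (a + b) ^ 2 := by
  have hs : 0 < a + b := by positivity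
  have hS : 0 < r + 1 / r := by positivity
  -- `x ↦ x + 1/x` attains its maximum over `[1/r, r]` at the endpoints.
  have hle : a + b ≤ r + 1 / r := by
    rw [← sub_nonneg]
    have : r + 1 / r - (a + b) = (r - a) * (r - b) / r := by
      field_simp
      linear_combination -hab
    rw [this]
    exact div_nonneg (mul_nonneg (by linarith) (by linarith)) hr.le
  have hlog : Real.log (a + b) - Real.log 2 ≤ (a - b) ^ 2 / 8 := by
    have h1 := Real.log_le_sub_one_of_pos (show 0 < ((a + b) / 2) ^ 2 by positivity)
    rw [Real.log_pow, Real.log_div hs.ne' (by norm_num)] at h1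
    push_cast at h1
    nlinarith
  calc 8 / (r + 1 / r) ^ 2 * (Real.log (a + b) - Real.log 2)
      ≤ 8 / (r + 1 / r) ^ 2 * ((a - b) ^ 2 / 8) := by gcongr
    _ ≤ 8 / (a + b) ^ 2 * ((a - b) ^ 2 / 8) := by gcongr
    _ = (a - b) ^ 2 / (a + b) ^ 2 := by ring

/-- Under the pairing condition `λ_i λ_{i'} = 1` and the pinching
`1/√Λ ≤ λ_i ≤ √Λ` (with `Λ ≥ 1`), setting `c = 8/(√Λ + 1/√Λ)²`, one has
`Σ_{k odd} (λ_k − λ_{k'})²/(λ_k + λ_{k'})² ≥ c (ln ∏_{k odd} (λ_k + λ_{k'}) − n ln 2)`;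
equivalently
`Σ_{k odd} (1 − λ_k²)²/(1 + λ_k²)² ≥ −c (ln(1/√(∏_i (1+λ_i²))) − ln(1/2^n))`.
("odd" refers to the paper's 1-based indexing, i.e. `(k : ℕ) % 2 = 0` here.) -/
theorem curvature_term_log_lower_bound (n : ℕ) (Λ : ℝ) (hΛ : 1 ≤ Λ)
    (lam : Fin (2 * n) → ℝ)
    (hpos : ∀ i, 0 < lam i)
    (hpair : ∀ i, lam i * lam (pr n i) = 1)
    (hbound : ∀ i, 1 / Real.sqrt Λ ≤ lam i ∧ lam i ≤ Real.sqrt Λ) :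
    (∑ k ∈ univ.filter (fun k : Fin (2 * n) => (k : ℕ) % 2 = 0),
        (lam k - lam (pr n k)) ^ 2 / (lam k + lam (pr n k)) ^ 2) ≥
      (8 / (Real.sqrt Λ + 1 / Real.sqrt Λ) ^ 2) *
        (Real.log (∏ k ∈ univ.filter (fun k : Fin (2 * n) => (k : ℕ) % 2 = 0),
            (lam k + lam (pr n k))) - (n : ℝ) * Real.log 2) ∧
    (∑ k ∈ univ.filter (fun k : Fin (2 * n) => (k : ℕ) % 2 = 0),
        (1 - lam k ^ 2) ^ 2 / (1 + lam k ^ 2) ^ 2) ≥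
      -((8 / (Real.sqrt Λ + 1 / Real.sqrt Λ) ^ 2) *
        (Real.log (1 / Real.sqrt (∏ i, (1 + lam i ^ 2))) -
          Real.log (1 / 2 ^ n))) := by
  have hr : 0 < Real.sqrt Λ := Real.sqrt_pos.mpr (by linarith)
  have hsum : ∀ k, 0 < lam k + lam (pr n k) := fun k => add_pos (hpos _) (hpos _)
  have first : (∑ k ∈ univ.filter (fun k : Fin (2 * n) => (k : ℕ) % 2 = 0),
        (lam k - lam (pr n k)) ^ 2 / (lam k + lam (pr n k)) ^ 2) ≥
      (8 / (Real.sqrt Λ + 1 / Real.sqrt Λ) ^ 2) *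
        (Real.log (∏ k ∈ univ.filter (fun k : Fin (2 * n) => (k : ℕ) % 2 = 0),
            (lam k + lam (pr n k))) - (n : ℝ) * Real.log 2) := by
    have hn : (n : ℝ) * Real.log 2 =
        ∑ k ∈ univ.filter (fun k : Fin (2 * n) => (k : ℕ) % 2 = 0), Real.log 2 := by
      rw [Finset.sum_const, card_pairs, nsmul_eq_mul]
    rw [Real.log_prod (fun k _ => (hsum k).ne'), hn, ← Finset.sum_sub_distrib, Finset.mul_sum]
    exact Finset.sum_le_sum fun k _ =>
      pair_bound (hpos _) (hpos _) (hpair k) hr (hbound _).2 (hbound _).2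
  refine ⟨first, ?_⟩
  have hprod : Real.sqrt (∏ i, (1 + lam i ^ 2)) =
      ∏ k ∈ univ.filter (fun k : Fin (2 * n) => (k : ℕ) % 2 = 0), (lam k + lam (pr n k)) := by
    rw [prod_univ_eq_prod_pairs, ← Real.sqrt_sq (Finset.prod_nonneg fun k _ => (hsum k).le),
      ← Finset.prod_pow]
    congr 1
    refine Finset.prod_congr rfl fun k _ => ?_
    linear_combination (lam k * lam (pr n k) - 1) * hpair k
  have hterm : ∀ k, (1 - lam k ^ 2) ^ 2 / (1 + lam k ^ 2) ^ 2 =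
      (lam k - lam (pr n k)) ^ 2 / (lam k + lam (pr n k)) ^ 2 := by
    intro k
    have h1 : 1 - lam k ^ 2 = lam k * (lam (pr n k) - lam k) := by
      linear_combination -hpair k
    have h2 : 1 + lam k ^ 2 = lam k * (lam k + lam (pr n k)) := by
      linear_combination -hpair k
    rw [h1, h2, mul_pow, mul_pow, mul_div_mul_left _ _ (pow_pos (hpos k) 2).ne']
    ring
  simp only [hterm]
  rw [hprod]
  simp only [one_div, Real.log_inv, Real.log_pow] at first ⊢
  refine le_of_eq_of_le ?_ first
  ring
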